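/- Suppose g(r) = o(r^{-c}) as r → ∞ for some c > d, and fix γ > 0. Let D_n(k) be the number of vertices of G_n(r̂_n(γ)) whose degree is at least k, and set k_n := α n r̂_n(γ)^d + d·(α n r̂_n(γ)^d)^{1/2}. Then E[D_n(k_n)/n] → 1 − Φ(d) as n → ∞, where Φ is the standard normal distribution function. -/

import Mathlib

open MeasureTheory ProbabilityTheory Filter Set

noncomputable section

namespace RCM

/-- The toroidal metric on the unit cube. -/
def torusDist {d : ℕ} (x y : EuclideanSpace ℝ (Fin d)) : ℝ :=
  ⨅ z : Fin d → ℤ, ‖x - y - (WithLp.equiv 2 (Fin d → ℝ)).symm (fun i => (z i : ℝ))‖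

/-- The half-open unit cube `S = (-1/2, 1/2]^d`. -/
def cube (d : ℕ) : Set (EuclideanSpace ℝ (Fin d)) :=
  {x | ∀ i, x i ∈ Set.Ioc (-(1/2) : ℝ) (1/2)}

/-- The random connection model: i.i.d. uniform points `X`, coupled Poisson counts `N`,
i.i.d. uniform edge variables `U`, with the three families mutually independent, and a
non-increasing connection function `g : [0,∞) → [0,1]` with finite positive integral `α`. -/
structure Model (d : ℕ) {Ω : Type*} [MeasurableSpace Ω] (P : Measure Ω) where
  g : ℝ → ℝ
  α : ℝ
  X : ℕ → Ω → EuclideanSpace ℝ (Fin d)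
  N : ℕ → Ω → ℕ
  U : ℕ → ℕ → Ω → ℝ
  g_antitone : AntitoneOn g (Set.Ici 0)
  g_mem : ∀ r : ℝ, 0 ≤ r → g r ∈ Set.Icc (0 : ℝ) 1
  g_integrable : MeasureTheory.Integrable (fun x : EuclideanSpace ℝ (Fin d) => g ‖x‖)
  α_def : α = ∫ x : EuclideanSpace ℝ (Fin d), g ‖x‖
  α_pos : 0 < α
  X_meas : ∀ i, Measurable (X i)
  X_unif : ∀ i : ℕ, 1 ≤ i → Measure.map (X i) P = volume.restrict (cube d)
  X_indep : iIndepFun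
    (fun i : {i : ℕ // 1 ≤ i} => X i) P
  N_meas : ∀ n, Measurable (N n)
  N_mono : ∀ ω, Monotone fun n => N n ω
  N_poisson : ∀ n k : ℕ,
    P {ω | N n ω = k} = ENNReal.ofReal (Real.exp (-(n : ℝ)) * (n : ℝ) ^ k / k.factorial)
  U_meas : ∀ i j, Measurable (U i j)
  U_unif : ∀ i j : ℕ, 1 ≤ i → i < j →
    Measure.map (U i j) P = volume.restrict (Set.Icc (0 : ℝ) 1)
  U_indep : iIndepFun
    (fun p : {p : ℕ × ℕ // 1 ≤ p.1 ∧ p.1 < p.2} => U p.1.1 p.1.2) P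
  families_indep : iIndep
    (![MeasurableSpace.comap (fun ω => fun i : ℕ => X i ω) inferInstance,
       MeasurableSpace.comap (fun ω => fun n : ℕ => N n ω) inferInstance,
       MeasurableSpace.comap (fun ω => fun p : ℕ × ℕ => U p.1 p.2 ω) inferInstance]) P

variable {d : ℕ} {Ω : Type*} [MeasurableSpace Ω] {P : Measure Ω}

/-- Adjacency in the graph `G_n(r)`: vertices `1 ≤ i,j ≤ N_n` are joined iff
`U_{ij} ≤ g(dist(X_i,X_j)/r)`. -/
def adj (M : Model d P) (n : ℕ) (r : ℝ) (ω : Ω) (i j : ℕ) : Prop :=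
  i ≠ j ∧ 1 ≤ i ∧ 1 ≤ j ∧ i ≤ M.N n ω ∧ j ≤ M.N n ω ∧
    M.U (min i j) (max i j) ω ≤ M.g (torusDist (M.X i ω) (M.X j ω) / r)

/-- The degree of vertex `i` in `G_n(r)`. -/
def deg (M : Model d P) (n : ℕ) (r : ℝ) (ω : Ω) (i : ℕ) : ℕ :=
  {j : ℕ | adj M n r ω i j}.ncard

/-- `W_n(r)`, the number of isolated vertices of `G_n(r)`. -/
def isolatedCount (M : Model d P) (n : ℕ) (r : ℝ) (ω : Ω) : ℕ :=
  {i : ℕ | 1 ≤ i ∧ i ≤ M.N n ω ∧ deg M n r ω i = 0}.ncard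


/-- `r̂_n(γ)` defined by `r̂_n(γ)^d = γ log n / (α n)`. -/
def rhat (M : Model d P) (γ : ℝ) (n : ℕ) : ℝ :=
  (γ * Real.log n / (M.α * n)) ^ ((1 : ℝ) / d)

/-- `d_n`, the critical parameter for absence of isolated nodes. -/
def critRadius (M : Model d P) (n : ℕ) (ω : Ω) : ℝ :=
  sInf {r : ℝ | 0 < r ∧ isolatedCount M n r ω = 0}

/-- The maximum vertex degree `Δ_n` of `G_n(r)`. -/
def maxDeg (M : Model d P) (n : ℕ) (r : ℝ) (ω : Ω) : ℕ :=
  (Finset.Icc 1 (M.N n ω)).sup (deg M n r ω)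

/-- The minimum vertex degree `δ_n` of `G_n(r)`. -/
def minDeg (M : Model d P) (n : ℕ) (r : ℝ) (ω : Ω) : ℕ :=
  sInf {k : ℕ | ∃ i, 1 ≤ i ∧ i ≤ M.N n ω ∧ deg M n r ω i = k}

/-- The length (toroidal metric) of the longest edge of `G_n(r)` (`0` if there are no edges). -/
def longestEdge (M : Model d P) (n : ℕ) (r : ℝ) (ω : Ω) : ℝ :=
  sSup ({0} ∪ {t : ℝ | ∃ i j, adj M n r ω i j ∧ t = torusDist (M.X i ω) (M.X j ω)})

/-- Connectivity of `G_n(r)`: any two vertices are joined by a path. -/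
def connectedGraph (M : Model d P) (n : ℕ) (r : ℝ) (ω : Ω) : Prop :=
  ∀ i j : ℕ, 1 ≤ i → i ≤ M.N n ω → 1 ≤ j → j ≤ M.N n ω →
    Relation.ReflTransGen (adj M n r ω) i j

/-- `H(x) = 1 - x + x log x` (with `H(0) = 1`, since `log 0 = 0` in Lean). -/
def H (x : ℝ) : ℝ := 1 - x + x * Real.log x

/-- The inverse of the restriction of `H` to `[1, ∞)`. -/
def Hplusinv (y : ℝ) : ℝ := sInf {x : ℝ | 1 ≤ x ∧ y ≤ H x}

/-- The inverse of the restriction of `H` to `[0, 1]`. -/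
def Hminusinv (y : ℝ) : ℝ := sInf {x : ℝ | 0 ≤ x ∧ H x ≤ y}

/-- The standard normal distribution function. -/
def stdNormalCDF (x : ℝ) : ℝ :=
  ∫ t in Set.Iic x, Real.exp (-t ^ 2 / 2) / Real.sqrt (2 * Real.pi)

/-! Given its position, a vertex of a graph on `m` vertices is joined to each of the `m - 1` others
independently, and with a probability `p(r)` that does not depend on the position, because the torus
is homogeneous. So its degree is binomial. Size-biasing the Poisson number of vertices removes the
vertex itself (`E[N f(N - 1)] = n E[f(N)]`), and a binomial thinning of a Poisson variable is again
Poisson. Hence the expected number of vertices of degree at least `k` is exactly `n` times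
`P(Po(n p(r)) ≥ k)`.

The decay of `g` makes the part of `∫ g(|x| / r) dx = α r ^ d` outside the unit cube `O(r ^ c)`.
So at `r = r̂_n` the mean `n p(r)` differs from `γ log n` by `O(n r̂_n ^ c) → 0`, and the central
limit theorem for Poisson variables, proved with characteristic functions, gives the limit.
-/

open scoped Topology unitInterval Asymptotics

/-! ### Normal approximation of Poisson measures -/

lemma charFun_map_sub_div_poissonMeasure (r : NNReal) (a b t : ℝ) :
    charFun ((poissonMeasure r).map fun k : ℕ => ((k : ℝ) - a) / b) t =
      Complex.exp
        (r * (Complex.exp ((t / b : ℝ) * Complex.I) - 1) - (a / b * t : ℝ) * Complex.I) := by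
  have hcomp : (fun k : ℕ => ((k : ℝ) - a) / b) =
      (fun y => y + -(a / b)) ∘ (fun y => b⁻¹ * y) ∘ (Nat.cast : ℕ → ℝ) := by
    ext k
    simp only [Function.comp_apply]
    ring
  rw [hcomp, ← Measure.map_map (by fun_prop) (by fun_prop),
    ← Measure.map_map (by fun_prop) (by fun_prop), charFun_map_add_const, charFun_map_mul,
    charFun_map_cast_poissonMeasure, ← Complex.exp_add, inv_mul_eq_div]
  congr 1
  simp only [conj_trivial, RCLike.inner_apply]
  push_cast
  ring

lemma exp_mul_I_sub_isLittleO_sq :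
    (fun s : ℝ => Complex.exp (s * Complex.I) - 1 - s * Complex.I + s ^ 2 / 2)
      =o[𝓝 0] fun s : ℝ => (s : ℂ) ^ 2 := by
  have hz : Tendsto (fun s : ℝ => (s : ℂ) * Complex.I) (𝓝 0) (𝓝 0) := by
    refine Continuous.tendsto' (by fun_prop) _ _ (by simp)
  have h := (Complex.exp_sub_sum_range_succ_isLittleO_pow 2).comp_tendsto hz
  simp only [Function.comp_def, mul_pow, Complex.I_sq, mul_neg_one] at h
  refine h.neg_right.congr_left (fun s => ?_) |>.congr_right fun s => neg_neg _
  simp only [Finset.sum_range_succ, Finset.sum_range_zero, Nat.factorial, Complex.I_sq]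
  push_cast
  ring

section CentralLimit

variable {ι : Type*} {l : Filter ι} {μ lam : ι → ℝ}

lemma tendsto_div_one_of_tendsto_sub_div_sqrt (hlam : Tendsto lam l atTop)
    (hμ : Tendsto (fun n => (μ n - lam n) / √(lam n)) l (𝓝 0)) :
    Tendsto (fun n => μ n / lam n) l (𝓝 1) := by
  have h := (hμ.mul (Real.tendsto_sqrt_atTop.comp hlam).inv_tendsto_atTop).const_add 1
  rw [mul_zero, add_zero] at h
  refine h.congr' ?_
  filter_upwards [hlam.eventually_gt_atTop 0] with n hn
  rw [Pi.inv_apply, Function.comp_apply, ← div_eq_mul_inv, div_div, Real.mul_self_sqrt hn.le]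
  field_simp
  ring

lemma tendsto_poisson_charFun_exponent (hlam : Tendsto lam l atTop)
    (hμ : Tendsto (fun n => (μ n - lam n) / √(lam n)) l (𝓝 0)) (t : ℝ) :
    Tendsto (fun n => (μ n : ℂ) * (Complex.exp ((t / √(lam n) : ℝ) * Complex.I) - 1) -
      (√(lam n) * t : ℝ) * Complex.I) l (𝓝 (-t ^ 2 / 2)) := by
  have hs : Tendsto (fun n => t / √(lam n)) l (𝓝 0) :=
    (Real.tendsto_sqrt_atTop.comp hlam).const_div_atTop t
  have hratio := tendsto_div_one_of_tendsto_sub_div_sqrt hlam hμ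
  have hquad : Tendsto (fun n => (μ n : ℂ) * ((t / √(lam n) : ℝ) : ℂ) ^ 2) l (𝓝 (t ^ 2 : ℝ)) := by
    have h := ((Complex.continuous_ofReal.tendsto _).comp (hratio.mul_const (t ^ 2)))
    rw [one_mul] at h
    refine h.congr' ?_
    filter_upwards [hlam.eventually_ge_atTop 0] with n hn
    rw [← Complex.ofReal_pow, div_pow, Real.sq_sqrt hn, Function.comp_apply]
    push_cast
    ring
  have hrem := ((Asymptotics.isBigO_refl (fun n => (μ n : ℂ)) l).mul_isLittleO
    (exp_mul_I_sub_isLittleO_sq.comp_tendsto hs)).trans_isBigO (hquad.isBigO_one ℂ)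
  have hlin := ((Complex.continuous_ofReal.tendsto _).comp (hμ.mul_const t)).mul_const Complex.I
  have hsum := (((Asymptotics.isLittleO_one_iff ℂ).1 hrem).add hlin).sub (hquad.div_const 2)
  have hval : (0 : ℂ) + ((0 * t : ℝ) : ℂ) * Complex.I - ((t ^ 2 : ℝ) : ℂ) / 2 = -t ^ 2 / 2 := by
    push_cast
    ring
  rw [hval] at hsum
  refine hsum.congr' ?_
  filter_upwards [hlam.eventually_gt_atTop 0] with n hn
  have hsqrt : ((√(lam n) : ℝ) : ℂ) ≠ 0 := by exact_mod_cast (Real.sqrt_pos.2 hn).ne'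
  have hsq : (lam n : ℂ) = ((√(lam n) : ℝ) : ℂ) ^ 2 := by exact_mod_cast (Real.sq_sqrt hn.le).symm
  simp only [Function.comp_apply]
  push_cast
  rw [hsq]
  field_simp
  ring

end CentralLimit

section PoissonCLT

variable {μ : ℕ → NNReal} {lam : ℕ → ℝ}

lemma tendstoInDistribution_poissonMeasure (hlam : Tendsto lam atTop atTop)
    (hμ : Tendsto (fun n => ((μ n : ℝ) - lam n) / √(lam n)) atTop (𝓝 0)) :
    TendstoInDistribution (fun n (k : ℕ) => ((k : ℝ) - lam n) / √(lam n)) atTop id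
      (fun n => poissonMeasure (μ n)) (gaussianReal 0 1) where
  forall_aemeasurable n := Measurable.of_discrete.aemeasurable
  aemeasurable_limit := aemeasurable_id
  tendsto := by
    refine ProbabilityMeasure.tendsto_of_tendsto_charFun fun t => ?_
    have h := (tendsto_poisson_charFun_exponent hlam hμ t).cexp
    simp only [ProbabilityMeasure.coe_mk, Measure.map_id, charFun_gaussianReal,
      charFun_map_sub_div_poissonMeasure, Real.div_sqrt]
    convert h using 2
    simp [neg_div]

lemma gaussianReal_real_Ici (x : ℝ) :
    (gaussianReal 0 1).real (Ici x) = 1 - stdNormalCDF x := by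
  have := nullSingletonClass_gaussianReal (μ := 0) (v := 1) one_ne_zero
  rw [← compl_Iio, probReal_compl_eq_one_sub measurableSet_Iio,
    measureReal_congr Iio_ae_eq_Iic, measureReal_def,
    gaussianReal_apply_eq_integral _ one_ne_zero,
    ENNReal.toReal_ofReal (integral_nonneg fun y => gaussianPDFReal_nonneg _ _ _), stdNormalCDF]
  simp only [gaussianPDFReal, NNReal.coe_one, mul_one, sub_zero, div_eq_inv_mul]

lemma tendsto_poissonMeasure_real_ge (hlam : Tendsto lam atTop atTop)
    (hμ : Tendsto (fun n => ((μ n : ℝ) - lam n) / √(lam n)) atTop (𝓝 0)) (x : ℝ) :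
    Tendsto (fun n => (poissonMeasure (μ n)).real {k : ℕ | lam n + x * √(lam n) ≤ k})
      atTop (𝓝 (1 - stdNormalCDF x)) := by
  have hfrontier : (gaussianReal 0 1).map id (frontier (Ici x)) = 0 := by
    rw [Measure.map_id, frontier_Ici]
    exact (nullSingletonClass_gaussianReal one_ne_zero).measure_singleton x
  have h := ProbabilityMeasure.tendsto_measure_of_null_frontier_of_tendsto'
    (tendstoInDistribution_poissonMeasure hlam hμ).tendsto hfrontier
  simp only [ProbabilityMeasure.coe_mk, Measure.map_id] at h
  rw [← gaussianReal_real_Ici]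
  refine ((ENNReal.tendsto_toReal (measure_ne_top _ _)).comp h).congr' ?_
  filter_upwards [hlam.eventually_gt_atTop 0] with n hn
  rw [Function.comp_apply, ← measureReal_def,
    map_measureReal_apply Measurable.of_discrete measurableSet_Ici]
  congr 1
  ext k
  simp only [mem_preimage, mem_Ici, mem_ofPred_eq]
  rw [le_div_iff₀ (Real.sqrt_pos.2 hn), le_sub_iff_add_le']

end PoissonCLT

/-! ### Size-biasing and thinning of Poisson measures -/

lemma choose_add_right_div_factorial (j k : ℕ) :
    ((j + k).choose k : ℝ) / (j + k).factorial = ((j.factorial : ℝ) * k.factorial)⁻¹ := by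
  rw [← Nat.choose_symm_add, Nat.cast_add_choose, div_div_cancel_left' (by positivity)]

lemma hasSum_poisson_mul_binomial (r p : ℝ) (k : ℕ) :
    HasSum (fun l : ℕ => Real.exp (-r) * r ^ l / l.factorial *
        (l.choose k * p ^ k * (1 - p) ^ (l - k)))
      (Real.exp (-(r * p)) * (r * p) ^ k / k.factorial) := by
  rw [← (add_left_injective k).hasSum_iff]
  · have h := (NormedSpace.expSeries_div_hasSum_exp (r * (1 - p))).mul_left
      (Real.exp (-r) * (r * p) ^ k / k.factorial)
    rw [← Real.exp_eq_exp_ℝ] at h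
    convert! h using 1
    · ext j
      have hchoose := choose_add_right_div_factorial j k
      simp only [Function.comp_apply, Nat.add_sub_cancel]
      calc _ = Real.exp (-r) * r ^ (j + k) * (((j + k).choose k : ℝ) / (j + k).factorial) *
              (p ^ k * (1 - p) ^ j) := by ring
        _ = _ := by
          rw [hchoose, mul_pow, mul_pow, pow_add]
          field_simp
    · rw [show -(r * p) = -r + r * (1 - p) by ring, Real.exp_add]
      ring
  · intro l hl
    have hlt : l < k := not_le.1 fun h => hl ⟨l - k, Nat.sub_add_cancel h⟩
    simp [Nat.choose_eq_zero_of_lt hlt]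

lemma poissonMeasure_bind_binomial (r : NNReal) (p : I) :
    (poissonMeasure r).bind (fun l => binomial l p) =
      poissonMeasure (r * unitInterval.toNNReal p) := by
  have hp := unitInterval.nonneg p
  have hp' := unitInterval.one_minus_nonneg p
  refine Measure.ext_of_singleton fun k => ?_
  have hsum := hasSum_poisson_mul_binomial r p k
  have hnonneg : ∀ l : ℕ, 0 ≤ Real.exp (-r) * r ^ l / l.factorial *
      (l.choose k * (p : ℝ) ^ k * (1 - p) ^ (l - k)) := fun l => by positivity
  rw [Measure.bind_apply (.singleton k) Measurable.of_discrete.aemeasurable, lintegral_countable',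
    poissonMeasure_singleton]
  calc _ = ∑' l : ℕ, ENNReal.ofReal (Real.exp (-r) * r ^ l / l.factorial *
            (l.choose k * (p : ℝ) ^ k * (1 - p) ^ (l - k))) := by
        refine tsum_congr fun l => ?_
        rw [poissonMeasure_singleton, binomial_singleton, mul_comm,
          ← ENNReal.ofReal_mul (by positivity)]
    _ = _ := by
        rw [← ENNReal.ofReal_tsum_of_nonneg hnonneg hsum.summable, hsum.tsum_eq]
        simp

lemma lintegral_natCast_mul_poissonMeasure (r : NNReal) (f : ℕ → ENNReal) :
    ∫⁻ m, m * f (m - 1) ∂poissonMeasure r = r * ∫⁻ m, f m ∂poissonMeasure r := by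
  have hweight : ∀ l : ℕ, ((l + 1 : ℕ) : ENNReal) * poissonMeasure r {l + 1} =
      r * poissonMeasure r {l} := fun l => by
    rw [poissonMeasure_singleton, poissonMeasure_singleton, ← ENNReal.ofReal_natCast,
      ← ENNReal.ofReal_coe_nnreal, ← ENNReal.ofReal_mul (by positivity),
      ← ENNReal.ofReal_mul (by positivity), Nat.factorial_succ]
    congr 1
    push_cast
    field_simp
    ring
  rw [lintegral_countable', lintegral_countable', tsum_eq_zero_add' ENNReal.summable,
    ← ENNReal.tsum_mul_left, Nat.cast_zero, zero_mul, zero_mul, zero_add]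
  refine tsum_congr fun l => ?_
  rw [Nat.add_sub_cancel, mul_right_comm, hweight]
  ring

/-! ### The torus -/

/-- The integer lattice of `EuclideanSpace ℝ (Fin d)`, as an additive map whose range acts on the
space by translations. -/
def latticeHom (d : ℕ) : (Fin d → ℤ) →+ EuclideanSpace ℝ (Fin d) where
  toFun z := (WithLp.equiv 2 (Fin d → ℝ)).symm (fun i => (z i : ℝ))
  map_zero' := by ext i; simp
  map_add' a b := by ext i; simp

lemma latticeHom_apply (z : Fin d → ℤ) (i : Fin d) : latticeHom d z i = z i := rfl

lemma torusDist_eq_iInf_latticeHom (x y : EuclideanSpace ℝ (Fin d)) :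
    torusDist x y = ⨅ z : Fin d → ℤ, ‖x - y - latticeHom d z‖ := rfl

lemma torusDist_nonneg (x y : EuclideanSpace ℝ (Fin d)) : 0 ≤ torusDist x y :=
  Real.iInf_nonneg fun _ => norm_nonneg _

lemma torusDist_latticeHom_add (x y : EuclideanSpace ℝ (Fin d)) (z : Fin d → ℤ) :
    torusDist x (latticeHom d z + y) = torusDist x y := by
  rw [torusDist_eq_iInf_latticeHom, torusDist_eq_iInf_latticeHom]
  refine (Equiv.addRight z).iInf_congr fun w => ?_
  rw [Equiv.coe_addRight, map_add]
  congr 1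
  abel

lemma torusDist_self_add (x w : EuclideanSpace ℝ (Fin d)) :
    torusDist x (x + w) = torusDist 0 w := by
  rw [torusDist_eq_iInf_latticeHom, torusDist_eq_iInf_latticeHom, sub_add_cancel_left, zero_sub]

lemma norm_le_norm_neg_sub_latticeHom {w : EuclideanSpace ℝ (Fin d)} (hw : w ∈ cube d)
    (z : Fin d → ℤ) : ‖w‖ ≤ ‖-w - latticeHom d z‖ := by
  rw [EuclideanSpace.norm_eq, EuclideanSpace.norm_eq]
  refine Real.sqrt_le_sqrt (Finset.sum_le_sum fun i _ => ?_)
  simp only [PiLp.sub_apply, PiLp.neg_apply, latticeHom_apply, Real.norm_eq_abs, sq_abs]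
  obtain ⟨hlower, hupper⟩ := hw i
  rcases lt_trichotomy (z i) 0 with hz | hz | hz
  · have hz' : (z i : ℝ) ≤ -1 := by exact_mod_cast Int.le_sub_one_of_lt hz
    nlinarith
  · simp [hz]
  · have hz' : (1 : ℝ) ≤ z i := by exact_mod_cast hz
    nlinarith

lemma torusDist_zero_left {w : EuclideanSpace ℝ (Fin d)} (hw : w ∈ cube d) :
    torusDist 0 w = ‖w‖ := by
  simp only [torusDist_eq_iInf_latticeHom, zero_sub]
  refine le_antisymm ?_ (le_ciInf (norm_le_norm_neg_sub_latticeHom hw))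
  exact (ciInf_le ⟨0, forall_mem_range.2 fun z => norm_nonneg _⟩ 0).trans_eq (by simp)

@[fun_prop]
lemma measurable_torusDist {β : Type*} [MeasurableSpace β] {f g : β → EuclideanSpace ℝ (Fin d)}
    (hf : Measurable f) (hg : Measurable g) : Measurable fun b => torusDist (f b) (g b) := by
  unfold torusDist
  fun_prop

lemma cube_eq_preimage_pi :
    cube d = WithLp.ofLp ⁻¹' univ.pi fun _ : Fin d => Ioc (-(1 / 2) : ℝ) (1 / 2) := by
  ext x
  simp [cube]

lemma measurableSet_cube : MeasurableSet (cube d) := by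
  rw [cube_eq_preimage_pi]
  exact (PiLp.volume_preserving_ofLp (Fin d)).measurable
    (MeasurableSet.univ_pi fun _ => measurableSet_Ioc)

lemma volume_cube : volume (cube d) = 1 := by
  rw [cube_eq_preimage_pi, (PiLp.volume_preserving_ofLp (Fin d)).measure_preimage
    (MeasurableSet.univ_pi fun _ => measurableSet_Ioc).nullMeasurableSet, Real.volume_pi_Ioc]
  norm_num

instance : IsProbabilityMeasure (volume.restrict (cube d)) :=
  ⟨by rw [Measure.restrict_apply_univ, volume_cube]⟩

lemma half_le_norm_of_notMem_cube {w : EuclideanSpace ℝ (Fin d)} (hw : w ∉ cube d) :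
    1 / 2 ≤ ‖w‖ := by
  simp only [cube, mem_ofPred_eq, not_forall, mem_Ioc, not_and_or, not_lt, not_le] at hw
  obtain ⟨i, hi⟩ := hw
  refine le_trans ?_ (PiLp.norm_apply_le w i)
  rw [Real.norm_eq_abs, le_abs]
  rcases hi with hi | hi
  · right; linarith
  · left; linarith

lemma latticeHom_add_mem_cube_iff (z : Fin d → ℤ) (x : EuclideanSpace ℝ (Fin d)) :
    latticeHom d z + x ∈ cube d ↔
      ∀ i, x i + z i • (1 : ℝ) ∈ Ioc (-(1 / 2) : ℝ) (-(1 / 2) + 1) := by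
  refine forall_congr' fun i => ?_
  rw [PiLp.add_apply, latticeHom_apply, zsmul_one, add_comm]
  norm_num

lemma isAddFundamentalDomain_cube :
    IsAddFundamentalDomain (latticeHom d).range (cube d)
      (volume : Measure (EuclideanSpace ℝ (Fin d))) := by
  refine IsAddFundamentalDomain.mk' measurableSet_cube.nullMeasurableSet fun x => ?_
  choose z hz hunique using fun i => existsUnique_add_zsmul_mem_Ioc one_pos (x i) (-(1 / 2))
  refine ⟨⟨latticeHom d z, z, rfl⟩, (latticeHom_add_mem_cube_iff z x).2 hz, ?_⟩
  rintro ⟨_, w, rfl⟩ hw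
  congr 2
  exact funext fun i => hunique i (w i) ((latticeHom_add_mem_cube_iff w x).1 hw i)

open scoped Pointwise in
lemma setLIntegral_cube_torusDist (F : ℝ → ENNReal) (x : EuclideanSpace ℝ (Fin d)) :
    ∫⁻ y in cube d, F (torusDist x y) = ∫⁻ w in cube d, F ‖w‖ := by
  have : Countable (latticeHom d).range := (countable_range (latticeHom d)).to_subtype
  have htranslate : IsAddFundamentalDomain (latticeHom d).range (x +ᵥ cube d)
      (volume : Measure (EuclideanSpace ℝ (Fin d))) :=
    isAddFundamentalDomain_cube.vadd_of_comm x
  rw [isAddFundamentalDomain_cube.setLIntegral_eq htranslate]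
  · simp only [← image_vadd, vadd_eq_add]
    rw [← (measurePreserving_add_left volume x).setLIntegral_comp_emb
      (measurableEmbedding_addLeft x)]
    refine setLIntegral_congr_fun measurableSet_cube fun w hw => ?_
    simp only [torusDist_self_add, torusDist_zero_left hw]
  · rintro ⟨_, z, rfl⟩ y
    exact congrArg F (torusDist_latticeHom_add x y z)

/-! ### Connection probabilities -/

lemma measurable_comp_of_antitoneOn_Ici {β : Type*} [MeasurableSpace β] {g : ℝ → ℝ}
    (hg : AntitoneOn g (Ici 0)) {f : β → ℝ} (hf : Measurable f) (hnonneg : ∀ b, 0 ≤ f b) :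
    Measurable fun b => g (f b) := by
  have hanti : Antitone fun t => g (max t 0) := fun s t hst =>
    hg (mem_Ici.2 (le_max_right _ _)) (mem_Ici.2 (le_max_right _ _)) (max_le_max_right 0 hst)
  simpa only [Function.comp_def, max_eq_left (hnonneg _)] using hanti.measurable.comp hf

lemma integrableOn_norm_rpow_neg_compl_cube {c : ℝ} (hc : (d : ℝ) < c) :
    IntegrableOn (fun w => ‖w‖ ^ (-c)) (cube d)ᶜ volume := by
  have hc0 : 0 < c := (Nat.cast_nonneg d).trans_lt hc
  have hint : Integrable fun w : EuclideanSpace ℝ (Fin d) => (1 + ‖w‖) ^ (-c) :=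
    integrable_one_add_norm (by simpa using hc)
  refine (hint.integrableOn.const_mul (3 ^ c)).mono'
    (measurable_norm.pow_const _).aestronglyMeasurable ?_
  refine (ae_restrict_iff' measurableSet_cube.compl).2 (Eventually.of_forall fun w hw => ?_)
  have hw := half_le_norm_of_notMem_cube hw
  have hw0 : 0 < ‖w‖ := by linarith
  rw [Real.norm_of_nonneg (by positivity), Real.rpow_neg (by positivity),
    Real.rpow_neg (by positivity), ← div_eq_mul_inv, ← Real.div_rpow (by positivity)
    (by positivity), ← Real.inv_rpow (by positivity)]
  refine Real.rpow_le_rpow (by positivity) ?_ hc0.le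
  rw [inv_eq_one_div, div_le_div_iff₀ hw0 (by positivity)]
  linarith

section Scaling

variable {F : Type*} [NormedAddCommGroup F] {g : ℝ → F}

lemma norm_div_eq_norm_inv_smul (w : EuclideanSpace ℝ (Fin d)) {r : ℝ} (hr : 0 < r) :
    ‖w‖ / r = ‖r⁻¹ • w‖ := by
  rw [norm_smul, norm_inv, Real.norm_of_nonneg hr.le, div_eq_inv_mul]

lemma integrable_comp_norm_div
    (hg : Integrable fun w : EuclideanSpace ℝ (Fin d) => g ‖w‖) {r : ℝ} (hr : 0 < r) :
    Integrable fun w : EuclideanSpace ℝ (Fin d) => g (‖w‖ / r) := by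
  simp_rw [norm_div_eq_norm_inv_smul _ hr]
  exact hg.comp_smul (inv_ne_zero hr.ne')

variable [NormedSpace ℝ F]

lemma integral_comp_norm_div (g : ℝ → F) {r : ℝ} (hr : 0 < r) :
    ∫ w : EuclideanSpace ℝ (Fin d), g (‖w‖ / r) =
      r ^ d • ∫ w : EuclideanSpace ℝ (Fin d), g ‖w‖ := by
  simp_rw [norm_div_eq_norm_inv_smul _ hr]
  rw [Measure.integral_comp_smul volume fun w : EuclideanSpace ℝ (Fin d) => g ‖w‖,
    finrank_euclideanSpace_fin, inv_pow, inv_inv, abs_of_pos (pow_pos hr d)]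

lemma setIntegral_cube_comp_norm_div_sub_isBigO {c : ℝ} (hc : (d : ℝ) < c)
    (hint : Integrable fun w : EuclideanSpace ℝ (Fin d) => g ‖w‖)
    (hg : g =O[atTop] fun r => r ^ (-c)) :
    (fun r => (∫ w in cube d, g (‖w‖ / r)) - r ^ d • ∫ w : EuclideanSpace ℝ (Fin d), g ‖w‖)
      =O[𝓝[>] 0] fun r => r ^ c := by
  obtain ⟨K, hK⟩ := hg.bound
  obtain ⟨s, hs⟩ := eventually_atTop.1 hK
  refine Asymptotics.IsBigO.of_bound (K * ∫ w in (cube d)ᶜ, ‖w‖ ^ (-c)) ?_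
  filter_upwards [tendsto_inv_nhdsGT_zero.eventually_ge_atTop (2 * s), self_mem_nhdsWithin]
    with r hsr hr
  rw [mem_Ioi] at hr
  have hsplit : (∫ w in cube d, g (‖w‖ / r)) - r ^ d • ∫ w : EuclideanSpace ℝ (Fin d), g ‖w‖ =
      -∫ w in (cube d)ᶜ, g (‖w‖ / r) := by
    rw [← integral_comp_norm_div g hr,
      ← integral_add_compl measurableSet_cube (integrable_comp_norm_div hint hr),
      sub_add_cancel_left]
  have htail : ∀ w ∈ (cube d)ᶜ, ‖g (‖w‖ / r)‖ ≤ K * r ^ c * ‖w‖ ^ (-c) := fun w hw => by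
    have hw := half_le_norm_of_notMem_cube hw
    have hfar : s ≤ ‖w‖ / r := by
      rw [div_eq_mul_inv]
      nlinarith [inv_pos.2 hr]
    refine (hs _ hfar).trans_eq ?_
    rw [Real.norm_of_nonneg (by positivity), Real.div_rpow (by positivity) hr.le,
      Real.rpow_neg hr.le, div_inv_eq_mul]
    ring
  rw [hsplit, norm_neg, Real.norm_of_nonneg (by positivity), mul_right_comm, ← integral_const_mul]
  exact norm_integral_le_of_norm_le ((integrableOn_norm_rpow_neg_compl_cube hc).const_mul _)
    ((ae_restrict_iff' measurableSet_cube.compl).2 (Eventually.of_forall htail))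

end Scaling

namespace Model

variable (M : Model d P)

lemma measurable_g_comp {β : Type*} [MeasurableSpace β] {f : β → ℝ} (hf : Measurable f)
    (hnonneg : ∀ b, 0 ≤ f b) : Measurable fun b => M.g (f b) :=
  measurable_comp_of_antitoneOn_Ici M.g_antitone hf hnonneg

/-- The probability that a vertex is joined to an independent uniform vertex in the graph of
connection range `r`. It is stated as an integral over the distance from the origin, which
translation invariance of the torus allows. -/
def connProb (r : ℝ) : ℝ := ∫ w in cube d, M.g (‖w‖ / r)

lemma connProb_sub_isBigO {c : ℝ} (hc : (d : ℝ) < c) (hg : M.g =O[atTop] fun r => r ^ (-c)) :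
    (fun r => M.connProb r - M.α * r ^ d) =O[𝓝[>] 0] fun r => r ^ c := by
  simpa only [connProb, M.α_def, smul_eq_mul, mul_comm] using
    setIntegral_cube_comp_norm_div_sub_isBigO hc M.g_integrable hg

variable {r : ℝ}

lemma integrable_g_norm_div (hr : 0 ≤ r) :
    Integrable (fun w => M.g (‖w‖ / r)) (volume.restrict (cube d)) := by
  refine Integrable.of_mem_Icc 0 1 (M.measurable_g_comp (by fun_prop) fun w => ?_).aemeasurable
    (Eventually.of_forall fun w => M.g_mem _ ?_) <;> positivity

lemma connProb_mem_unitInterval (hr : 0 ≤ r) : M.connProb r ∈ I := by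
  have hg : ∀ w : EuclideanSpace ℝ (Fin d), M.g (‖w‖ / r) ∈ Icc (0 : ℝ) 1 := fun w =>
    M.g_mem _ (by positivity)
  refine ⟨integral_nonneg fun w => (hg w).1, ?_⟩
  exact (integral_mono (M.integrable_g_norm_div hr) (integrable_const 1) fun w => (hg w).2).trans_eq
    (by simp)

lemma setLIntegral_g_torusDist (hr : 0 ≤ r) (x : EuclideanSpace ℝ (Fin d)) :
    ∫⁻ y in cube d, ENNReal.ofReal (M.g (torusDist x y / r)) = ENNReal.ofReal (M.connProb r) := by
  rw [setLIntegral_cube_torusDist (fun t => ENNReal.ofReal (M.g (t / r))), connProb,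
    ofReal_integral_eq_lintegral_ofReal (M.integrable_g_norm_div hr)]
  exact Eventually.of_forall fun w => (M.g_mem _ (by positivity)).1

end Model

/-! ### Independent trials -/

section IndependentTrials

variable {α β κ : Type*} [MeasurableSpace α] [MeasurableSpace β]

lemma map_prop_eq_bernoulliMeasure {ν : Measure β} [IsProbabilityMeasure ν] {q : β → Prop}
    (hq : MeasurableSet {b | q b}) {p : I} (hp : ν {b | q b} = unitInterval.toNNReal p) :
    ν.map q = bernoulliMeasure True False p := by
  classical
  refine Measure.ext_of_singleton fun t => ?_
  rw [Measure.map_apply (measurableSet_setOfPred.1 hq) (.singleton t),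
    bernoulliMeasure_apply p (.singleton t)]
  by_cases ht : t
  · simpa [ht, preimage] using hp
  · have hσ : (1 : ENNReal) - unitInterval.toNNReal p = unitInterval.toNNReal (σ p) :=
      ENNReal.sub_eq_of_eq_add ENNReal.coe_ne_top (by simp [← ENNReal.coe_add])
    simpa [ht, preimage, ← hσ, ← hp, compl_ofPred] using prob_compl_eq_one_sub hq

lemma map_ncard_pi_bernoulliMeasure [Fintype κ] (p : I) :
    (Measure.pi fun _ : κ => bernoulliMeasure True False p).map (fun a => {j | a j}.ncard) =
      binomial (Fintype.card κ) p := by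
  have hset : setBernoulli univ p =
      (Measure.pi fun _ : κ => bernoulliMeasure True False p).map fun a => {j | a j} := by
    simp only [setBernoulli_eq_map, Measure.infinitePi_eq_pi, bernoulliMeasure_def, mem_univ]
  refine Measure.ext_of_singleton fun k => ?_
  have h := map_ncard_setBernoulli_singleton (finite_univ (α := κ)) p k
  rw [hset, Measure.map_map (by fun_prop) (by fun_prop)] at h
  rw [binomial_singleton, ← Nat.card_eq_fintype_card, ← ncard_univ]
  exact h

lemma map_prod_eq_of_forall_map_eq {γ : Type*} [MeasurableSpace γ] {ν₀ : Measure α}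
    [IsProbabilityMeasure ν₀] {ν : Measure β} [SFinite ν] {ρ : Measure γ} {f : α × β → γ}
    (hf : Measurable f) (hρ : ∀ a, ν.map (fun b => f (a, b)) = ρ) : (ν₀.prod ν).map f = ρ := by
  ext s hs
  have hslice : ∀ a, ν (Prod.mk a ⁻¹' (f ⁻¹' s)) = ρ s := fun a => by
    rw [← hρ a, Measure.map_apply (by fun_prop) hs, preimage_preimage]
  simp [Measure.map_apply hf hs, Measure.prod_apply (hf hs), hslice]

lemma hasLaw_ncard_prod_pi_binomial [Fintype κ] {ν₀ : Measure α} [IsProbabilityMeasure ν₀]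
    {ν : Measure β} [IsProbabilityMeasure ν] {R : α → β → Prop}
    (hR : MeasurableSet {q : α × β | R q.1 q.2}) {p : I}
    (hp : ∀ a, ν {b | R a b} = unitInterval.toNNReal p) :
    HasLaw (fun q => {j | R q.1 (q.2 j)}.ncard) (binomial (Fintype.card κ) p)
      (ν₀.prod (Measure.pi fun _ : κ => ν)) := by
  have hR' : Measurable fun q : α × β => R q.1 q.2 := measurableSet_setOfPred.1 hR
  have hcount : Measurable fun a : κ → Prop => {j | a j}.ncard := by fun_prop
  have hedges : Measurable fun q : α × (κ → β) => fun j => R q.1 (q.2 j) := by fun_prop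
  refine ⟨(hcount.comp hedges).aemeasurable,
    map_prod_eq_of_forall_map_eq (hcount.comp hedges) fun a => ?_⟩
  have hRa : Measurable (R a) := hR'.comp measurable_prodMk_left
  have hmap := map_prop_eq_bernoulliMeasure (measurableSet_setOfPred.2 hRa) (hp a)
  rw [← map_ncard_pi_bernoulliMeasure, ← hmap, ← Measure.pi_map_pi fun _ => hRa.aemeasurable,
    Measure.map_map (by fun_prop) (by fun_prop)]
  rfl

lemma prod_restrict_Icc_setOf_le {ν : Measure β} {f : β → ℝ}
    (hf : Measurable f) (hf_le : ∀ b, f b ≤ 1) :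
    (ν.prod (volume.restrict (Icc (0 : ℝ) 1))) {q | q.2 ≤ f q.1} =
      ∫⁻ b, ENNReal.ofReal (f b) ∂ν := by
  rw [Measure.prod_apply (measurableSet_le (by fun_prop) (by fun_prop))]
  refine lintegral_congr fun b => ?_
  have hslice : Iic (f b) ∩ Icc 0 1 = Icc 0 (f b) := by
    ext u
    have := hf_le b
    grind
  change volume.restrict (Icc (0 : ℝ) 1) (Iic (f b)) = _
  rw [Measure.restrict_apply measurableSet_Iic, hslice, Real.volume_Icc, sub_zero]

lemma lintegral_comp_eq_lintegral_lintegral_of_indepFun [IsFiniteMeasure P]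
    {X : Ω → α} {Y : Ω → β} {μ : Measure α}
    (hX : HasLaw X μ P) (hY : Measurable Y) (hindep : IndepFun X Y P) {f : α × β → ENNReal}
    (hf : Measurable f) : ∫⁻ ω, f (X ω, Y ω) ∂P = ∫⁻ a, ∫⁻ ω, f (a, Y ω) ∂P ∂μ := by
  have hY' : HasLaw Y (P.map Y) P := ⟨hY.aemeasurable, rfl⟩
  rw [(hindep.hasLaw_prod hX hY').lintegral_comp hf.aemeasurable, lintegral_prod _ hf.aemeasurable]
  exact lintegral_congr fun a => lintegral_map (hf.comp measurable_prodMk_left) hY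

end IndependentTrials

/-! ### The law of a degree -/

namespace Model

variable (M : Model d P)

lemma hasLaw_X {i : ℕ} (hi : 1 ≤ i) : HasLaw (M.X i) (volume.restrict (cube d)) P :=
  ⟨(M.X_meas i).aemeasurable, M.X_unif i hi⟩

lemma hasLaw_U {i j : ℕ} (hi : 1 ≤ i) (hij : i < j) :
    HasLaw (M.U i j) (volume.restrict (Icc (0 : ℝ) 1)) P :=
  ⟨(M.U_meas i j).aemeasurable, M.U_unif i j hi hij⟩

lemma hasLaw_N (n : ℕ) : HasLaw (M.N n) (poissonMeasure n) P where
  aemeasurable := (M.N_meas n).aemeasurable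
  map_eq := Measure.ext_of_singleton fun k => by
    rw [Measure.map_apply (M.N_meas n) (.singleton k), poissonMeasure_singleton]
    exact M.N_poisson n k

/-- The positions of all potential vertices together with the variables of all potential edges,
an edge `{i, j}` with `i < j` being indexed by `(i, j)`. -/
def config (ω : Ω) : (ℕ → EuclideanSpace ℝ (Fin d)) × (ℕ × ℕ → ℝ) :=
  (fun i => M.X i ω, fun e => M.U e.1 e.2 ω)

lemma measurable_config : Measurable M.config :=
  (measurable_pi_lambda _ M.X_meas).prodMk (measurable_pi_lambda _ fun e => M.U_meas e.1 e.2)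

lemma indepFun_N_config (n : ℕ) : IndepFun (M.N n) M.config P := by
  have hX : Measurable fun ω i => M.X i ω := measurable_pi_lambda _ M.X_meas
  have hN : Measurable fun ω k => M.N k ω := measurable_pi_lambda _ M.N_meas
  have hU : Measurable fun ω (e : ℕ × ℕ) => M.U e.1 e.2 ω :=
    measurable_pi_lambda _ fun e => M.U_meas e.1 e.2
  have h := indep_iSup_of_disjoint
    (fun k => by
      fin_cases k
      exacts [hX.comap_le, hN.comap_le, hU.comap_le])
    M.families_indep (show Disjoint ({1} : Set (Fin 3)) {0, 2} by simp)
  simp only [iSup_insert, iSup_singleton] at h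
  have hfam : IndepFun (fun ω k => M.N k ω) M.config P := by
    rw [IndepFun_iff_Indep, show MeasurableSpace.comap M.config Prod.instMeasurableSpace = _ from
      MeasurableSpace.comap_prodMk _ _]
    exact h
  exact hfam.comp (measurable_pi_apply n) measurable_id

/-- The degree of the vertex `i` in the graph of connection range `r` on the vertex set `T ∪ {i}`,
as a function of a configuration. -/
def degreeIn (r : ℝ) (i : ℕ) (T : Finset ℕ)
    (q : (ℕ → EuclideanSpace ℝ (Fin d)) × (ℕ × ℕ → ℝ)) : ℕ :=
  {j : T | q.2 (min i j, max i j) ≤ M.g (torusDist (q.1 i) (q.1 j) / r)}.ncard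

lemma deg_eq_degreeIn {n i : ℕ} {ω : Ω} (hi : i ∈ Finset.Icc 1 (M.N n ω)) (r : ℝ) :
    deg M n r ω i = M.degreeIn r i ((Finset.Icc 1 (M.N n ω)).erase i) (M.config ω) := by
  rw [deg, degreeIn, ← ncard_image_of_injective _ Subtype.val_injective]
  congr 1
  ext j
  simp only [adj, config, mem_ofPred_eq, mem_image, Subtype.exists, Finset.mem_erase,
    Finset.mem_Icc, exists_and_left, exists_prop, exists_eq_right_right]
  grind

variable {r : ℝ}

lemma measurable_degreeIn (hr : 0 ≤ r) (i : ℕ) (T : Finset ℕ) : Measurable (M.degreeIn r i T) := by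
  have hcount : Measurable fun a : T → Prop => {j | a j}.ncard := by fun_prop
  refine hcount.comp (measurable_pi_lambda _ fun j => measurableSet_setOfPred.1 ?_)
  exact measurableSet_le (by fun_prop) (M.measurable_g_comp (by fun_prop) fun q =>
    div_nonneg (torusDist_nonneg _ _) hr)

section Star

variable {i : ℕ} {T : Finset ℕ}

lemma hasLaw_star_edges (hi : 1 ≤ i) (hT : ∀ j ∈ T, 1 ≤ j) (hiT : i ∉ T) :
    HasLaw (fun ω (j : T) => M.U (min i j) (max i j) ω)
      (Measure.pi fun _ : T => volume.restrict (Icc (0 : ℝ) 1)) P := by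
  have hne : ∀ j : T, i ≠ j := fun j h => hiT (h ▸ j.2)
  have hpos : ∀ j : T, 1 ≤ min i j := fun j => le_min hi (hT j j.2)
  let index : T → {e : ℕ × ℕ // 1 ≤ e.1 ∧ e.1 < e.2} := fun j =>
    ⟨(min i j, max i j), hpos j, min_lt_max.2 (hne j)⟩
  have hindex : index.Injective := fun a b hab => by
    simp only [index, Subtype.mk.injEq, Prod.mk.injEq] at hab
    exact Subtype.ext (by omega)
  exact (M.U_indep.precomp hindex).hasLaw_pi fun j => M.hasLaw_U (hpos j) (min_lt_max.2 (hne j))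

variable [IsProbabilityMeasure P]

lemma hasLaw_star_positions (hi : 1 ≤ i) (hT : ∀ j ∈ T, 1 ≤ j) (hiT : i ∉ T) :
    HasLaw (fun ω => (M.X i ω, fun j : T => M.X j ω))
      ((volume.restrict (cube d)).prod (Measure.pi fun _ : T => volume.restrict (cube d))) P := by
  let index : T → {k : ℕ // 1 ≤ k} := fun j => ⟨j, hT j j.2⟩
  have hindex : index.Injective := fun a b hab => Subtype.ext (Subtype.mk.inj hab)
  have hindep : IndepFun (M.X i) (fun ω (j : T) => M.X j ω) P := by
    have hi_notMem : ⟨i, hi⟩ ∉ Finset.univ.map ⟨index, hindex⟩ := fun hmem => by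
      obtain ⟨j, -, hj⟩ := Finset.mem_map.1 hmem
      exact hiT (Subtype.mk.inj hj ▸ j.2)
    have h := M.X_indep.indepFun_finset {⟨i, hi⟩} (Finset.univ.map ⟨index, hindex⟩)
      (Finset.disjoint_singleton_left.2 hi_notMem) fun j => M.X_meas j
    exact h.comp (measurable_pi_apply ⟨⟨i, hi⟩, by simp⟩)
      (measurable_pi_lambda _ fun j : T => measurable_pi_apply ⟨index j, by simp⟩)
  exact hindep.hasLaw_prod (M.hasLaw_X hi)
    ((M.X_indep.precomp hindex).hasLaw_pi fun j => M.hasLaw_X (hT j j.2))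

lemma hasLaw_star (hi : 1 ≤ i) (hT : ∀ j ∈ T, 1 ≤ j) (hiT : i ∉ T) :
    HasLaw (fun ω => (M.X i ω, fun j : T => (M.X j ω, M.U (min i j) (max i j) ω)))
      ((volume.restrict (cube d)).prod (Measure.pi fun _ : T =>
        (volume.restrict (cube d)).prod (volume.restrict (Icc (0 : ℝ) 1)))) P := by
  have hindep : IndepFun (fun ω i => M.X i ω) (fun ω (e : ℕ × ℕ) => M.U e.1 e.2 ω) P :=
    M.families_indep.indep (show (0 : Fin 3) ≠ 2 by decide)
  have hstar : IndepFun (fun ω => (M.X i ω, fun j : T => M.X j ω))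
      (fun ω (j : T) => M.U (min i j) (max i j) ω) P :=
    hindep.comp (φ := fun x => (x i, fun j : T => x j)) (ψ := fun u (j : T) => u (min i j, max i j))
      (by fun_prop) (by fun_prop)
  have hlaw := hstar.hasLaw_prod (M.hasLaw_star_positions hi hT hiT)
    (M.hasLaw_star_edges hi hT hiT)
  have hzip := (MeasurePreserving.id (volume.restrict (cube d))).prod
    (measurePreserving_arrowProdEquivProdArrow (EuclideanSpace ℝ (Fin d)) ℝ T
      (fun _ => volume.restrict (cube d)) (fun _ => volume.restrict (Icc (0 : ℝ) 1))).symm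
  exact (hzip.comp (measurePreserving_prodAssoc _ _ _)).comp_hasLaw hlaw

lemma hasLaw_degreeIn_config (hr : 0 ≤ r) (hi : 1 ≤ i) (hT : ∀ j ∈ T, 1 ≤ j) (hiT : i ∉ T) :
    HasLaw (fun ω => M.degreeIn r i T (M.config ω))
      (binomial T.card ⟨M.connProb r, M.connProb_mem_unitInterval hr⟩) P := by
  have : IsProbabilityMeasure (volume.restrict (Icc (0 : ℝ) 1)) := ⟨by simp⟩
  have hnonneg : ∀ x y : EuclideanSpace ℝ (Fin d), 0 ≤ torusDist x y / r := fun x y =>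
    div_nonneg (torusDist_nonneg x y) hr
  have hedge : MeasurableSet {q : EuclideanSpace ℝ (Fin d) × EuclideanSpace ℝ (Fin d) × ℝ |
      q.2.2 ≤ M.g (torusDist q.1 q.2.1 / r)} :=
    measurableSet_le (by fun_prop) (M.measurable_g_comp (by fun_prop) fun q => hnonneg q.1 q.2.1)
  have hprob : ∀ x : EuclideanSpace ℝ (Fin d),
      (volume.restrict (cube d)).prod (volume.restrict (Icc (0 : ℝ) 1))
        {v | v.2 ≤ M.g (torusDist x v.1 / r)} = ENNReal.ofReal (M.connProb r) := fun x => by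
    rw [← M.setLIntegral_g_torusDist hr x]
    exact prod_restrict_Icc_setOf_le (M.measurable_g_comp (by fun_prop) (hnonneg x)) fun y =>
      (M.g_mem _ (hnonneg x y)).2
  have hcount := hasLaw_ncard_prod_pi_binomial (κ := T) (ν₀ := volume.restrict (cube d))
    (p := ⟨M.connProb r, M.connProb_mem_unitInterval hr⟩) hedge
    fun x => (hprob x).trans (ENNReal.ofReal_eq_coe_nnreal _)
  rw [Fintype.card_coe] at hcount
  exact hcount.comp (M.hasLaw_star hi hT hiT)

end Star

end Model

/-! ### Expected degree counts -/

namespace Model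

variable (M : Model d P) {r : ℝ}

/-- The number of vertices with degree in `s` in the graph of connection range `r` on the vertex set
`{1, …, m}`, as a function of a configuration. -/
def degreeCount (r : ℝ) (s : Set ℕ) (m : ℕ)
    (q : (ℕ → EuclideanSpace ℝ (Fin d)) × (ℕ × ℕ → ℝ)) : ℕ :=
  ∑ i ∈ Finset.Icc 1 m, s.indicator 1 (M.degreeIn r i ((Finset.Icc 1 m).erase i) q)

lemma ncard_setOf_deg_mem (r : ℝ) (s : Set ℕ) (n : ℕ) (ω : Ω) :
    {i : ℕ | 1 ≤ i ∧ i ≤ M.N n ω ∧ deg M n r ω i ∈ s}.ncard =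
      M.degreeCount r s (M.N n ω) (M.config ω) := by
  classical
  have hset : {i : ℕ | 1 ≤ i ∧ i ≤ M.N n ω ∧ deg M n r ω i ∈ s} =
      {i ∈ Finset.Icc 1 (M.N n ω) | deg M n r ω i ∈ s} := by
    ext i
    simp [and_assoc]
  rw [hset, ncard_coe_finset, Finset.card_filter, degreeCount]
  refine Finset.sum_congr rfl fun i hi => ?_
  rw [M.deg_eq_degreeIn hi, indicator_apply, Pi.one_apply]

lemma measurable_degreeCount (hr : 0 ≤ r) (s : Set ℕ) (m : ℕ) :
    Measurable (M.degreeCount r s m) :=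
  Finset.measurable_sum _ fun i _ =>
    (Measurable.of_discrete (f := s.indicator 1)).comp (M.measurable_degreeIn hr i _)

lemma measurable_uncurry_degreeCount (hr : 0 ≤ r) (s : Set ℕ) :
    Measurable fun q : ℕ × (ℕ → EuclideanSpace ℝ (Fin d)) × (ℕ × ℕ → ℝ) =>
      M.degreeCount r s q.1 q.2 :=
  measurable_from_prod_countable_right (M.measurable_degreeCount hr s)

lemma measurable_ncard_setOf_deg_mem (hr : 0 ≤ r) (s : Set ℕ) (n : ℕ) :
    Measurable fun ω => {i : ℕ | 1 ≤ i ∧ i ≤ M.N n ω ∧ deg M n r ω i ∈ s}.ncard := by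
  have hpair := (M.N_meas n).prodMk M.measurable_config
  simpa only [M.ncard_setOf_deg_mem, Function.comp_def] using
    (M.measurable_uncurry_degreeCount hr s).comp hpair

variable [IsProbabilityMeasure P]

lemma lintegral_degreeCount_config (hr : 0 ≤ r) (s : Set ℕ) (m : ℕ) :
    ∫⁻ ω, (M.degreeCount r s m (M.config ω) : ENNReal) ∂P =
      m * binomial (m - 1) ⟨M.connProb r, M.connProb_mem_unitInterval hr⟩ s := by
  have hlaw : ∀ i ∈ Finset.Icc 1 m,
      ∫⁻ ω, ((s.indicator 1 (M.degreeIn r i ((Finset.Icc 1 m).erase i) (M.config ω)) : ℕ) : ENNReal)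
        ∂P = binomial (m - 1) ⟨M.connProb r, M.connProb_mem_unitInterval hr⟩ s := by
    intro i hi
    have h := M.hasLaw_degreeIn_config hr (Finset.mem_Icc.1 hi).1
      (fun j hj => (Finset.mem_Icc.1 (Finset.mem_of_mem_erase hj)).1)
      (Finset.notMem_erase i (Finset.Icc 1 m))
    rw [Finset.card_erase_of_mem hi, Nat.card_Icc, Nat.add_sub_cancel] at h
    rw [h.lintegral_comp (f := fun k => ((s.indicator 1 k : ℕ) : ENNReal))
      Measurable.of_discrete.aemeasurable, ← lintegral_indicator_one .of_discrete]
    refine lintegral_congr fun k => ?_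
    by_cases hk : k ∈ s <;> simp [hk]
  simp only [degreeCount, Nat.cast_sum]
  rw [lintegral_finsetSum, Finset.sum_congr rfl hlaw]
  · simp
  · exact fun i _ => (Measurable.of_discrete (f := fun k => ((s.indicator 1 k : ℕ) : ENNReal))).comp
      ((M.measurable_degreeIn hr i _).comp M.measurable_config)

lemma lintegral_ncard_setOf_deg_mem (hr : 0 ≤ r) (s : Set ℕ) (n : ℕ) :
    ∫⁻ ω, ({i : ℕ | 1 ≤ i ∧ i ≤ M.N n ω ∧ deg M n r ω i ∈ s}.ncard : ENNReal) ∂P =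
      n * poissonMeasure (n * (M.connProb r).toNNReal) s := by
  let p : I := ⟨M.connProb r, M.connProb_mem_unitInterval hr⟩
  have hp : (M.connProb r).toNNReal = unitInterval.toNNReal p := Real.toNNReal_of_nonneg p.2.1
  have hmeas : Measurable fun q : ℕ × _ => (M.degreeCount r s q.1 q.2 : ENNReal) :=
    Measurable.of_discrete.comp (M.measurable_uncurry_degreeCount hr s)
  simp_rw [M.ncard_setOf_deg_mem]
  rw [lintegral_comp_eq_lintegral_lintegral_of_indepFun (M.hasLaw_N n) M.measurable_config
    (M.indepFun_N_config n) hmeas]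
  simp_rw [M.lintegral_degreeCount_config hr]
  rw [lintegral_natCast_mul_poissonMeasure n fun l => binomial l p s, hp,
    ← poissonMeasure_bind_binomial, Measure.bind_apply .of_discrete
      Measurable.of_discrete.aemeasurable, ENNReal.coe_natCast]

lemma integral_ncard_setOf_deg_mem_div (hr : 0 ≤ r) (s : Set ℕ) {n : ℕ} (hn : n ≠ 0) :
    ∫ ω, ({i : ℕ | 1 ≤ i ∧ i ≤ M.N n ω ∧ deg M n r ω i ∈ s}.ncard : ℝ) / n ∂P =
      (poissonMeasure (n * (M.connProb r).toNNReal)).real s := by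
  have hmeas : Measurable fun ω =>
      ({i : ℕ | 1 ≤ i ∧ i ≤ M.N n ω ∧ deg M n r ω i ∈ s}.ncard : ENNReal) :=
    Measurable.of_discrete.comp (M.measurable_ncard_setOf_deg_mem hr s n)
  simp_rw [integral_div, ← ENNReal.toReal_natCast (Set.ncard _)]
  rw [integral_toReal hmeas.aemeasurable (Eventually.of_forall fun _ => ENNReal.natCast_lt_top _),
    M.lintegral_ncard_setOf_deg_mem hr, ENNReal.toReal_mul, ENNReal.toReal_natCast,
    mul_div_cancel_left₀ _ (Nat.cast_ne_zero.2 hn), measureReal_def]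

end Model

/-! ### The critical connection range -/

section ConnectionRange

variable (M : Model d P) {γ : ℝ}

lemma rhat_pos (hγ : 0 < γ) {n : ℕ} (hn : 2 ≤ n) : 0 < rhat M γ n := by
  have hlog : 0 < Real.log n := Real.log_pos (Nat.one_lt_cast.2 hn)
  have := M.α_pos
  unfold rhat
  positivity

lemma alpha_mul_rhat_pow (hd : d ≠ 0) (hγ : 0 ≤ γ) {n : ℕ} (hn : n ≠ 0) :
    M.α * n * rhat M γ n ^ d = γ * Real.log n := by
  have := M.α_pos
  have := Real.log_natCast_nonneg n
  rw [rhat, one_div, Real.rpow_inv_natCast_pow (by positivity) hd, mul_div_cancel₀]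
  positivity

lemma tendsto_mul_log_natCast_atTop (hγ : 0 < γ) :
    Tendsto (fun n : ℕ => γ * Real.log n) atTop atTop :=
  (Real.tendsto_log_atTop.comp tendsto_natCast_atTop_atTop).const_mul_atTop hγ

lemma tendsto_rhat (hd : d ≠ 0) (hγ : 0 < γ) : Tendsto (rhat M γ) atTop (𝓝[>] 0) := by
  refine tendsto_nhdsWithin_iff.2 ⟨?_, (eventually_ge_atTop 2).mono fun n => rhat_pos M hγ⟩
  have hlog : Tendsto (fun n : ℕ => Real.log n / n) atTop (𝓝 0) :=
    Real.isLittleO_log_id_atTop.tendsto_div_nhds_zero.comp tendsto_natCast_atTop_atTop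
  have hbase : Tendsto (fun n : ℕ => γ * Real.log n / (M.α * n)) atTop (𝓝 0) := by
    simpa only [mul_zero, div_mul_div_comm] using hlog.const_mul (γ / M.α)
  have hpow := hbase.rpow_const (p := 1 / (d : ℝ)) (Or.inr (by positivity))
  rwa [Real.zero_rpow (by positivity)] at hpow

lemma tendsto_natCast_mul_rhat_rpow {c : ℝ} (hd : d ≠ 0) (hc : (d : ℝ) < c) (hγ : 0 ≤ γ) :
    Tendsto (fun n : ℕ => n * rhat M γ n ^ c) atTop (𝓝 0) := by
  have hα := M.α_pos
  have hexp : 0 < c / d - 1 := sub_pos.2 ((one_lt_div (by positivity)).2 hc)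
  have hlim := (((isLittleO_log_rpow_rpow_atTop (c / d) hexp).tendsto_div_nhds_zero).comp
    tendsto_natCast_atTop_atTop).const_mul ((γ / M.α) ^ (c / d))
  rw [mul_zero] at hlim
  refine hlim.congr' ?_
  filter_upwards [eventually_ne_atTop 0] with n hn
  have hlog := Real.log_natCast_nonneg n
  rw [Function.comp_apply, rhat, ← Real.rpow_mul (by positivity), one_div_mul_eq_div,
    mul_div_mul_comm, Real.mul_rpow (by positivity) (by positivity),
    Real.div_rpow hlog (by positivity), Real.rpow_sub_one (by positivity)]
  field_simp

lemma tendsto_natCast_mul_connProb_rhat_sub {c : ℝ} (hd : d ≠ 0) (hc : (d : ℝ) < c)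
    (hg : M.g =O[atTop] fun r => r ^ (-c)) (hγ : 0 < γ) :
    Tendsto (fun n : ℕ => n * M.connProb (rhat M γ n) - γ * Real.log n) atTop (𝓝 0) := by
  have hO := (Asymptotics.isBigO_refl (fun n : ℕ => (n : ℝ)) atTop).mul
    ((M.connProb_sub_isBigO hc hg).comp_tendsto (tendsto_rhat M hd hγ))
  refine (hO.trans_tendsto (tendsto_natCast_mul_rhat_rpow M hd hc hγ.le)).congr' ?_
  filter_upwards [eventually_ne_atTop 0] with n hn
  rw [← alpha_mul_rhat_pow M hd hγ.le hn, Function.comp_apply]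
  ring

end ConnectionRange

theorem degree_count_tendsto_general (hd : d ≠ 0) [IsProbabilityMeasure P] (M : Model d P)
    {c : ℝ} (hc : (d : ℝ) < c) (hg : M.g =O[atTop] fun r : ℝ => r ^ (-c))
    {γ : ℝ} (hγ : 0 < γ) (x : ℝ) :
    Tendsto (fun n : ℕ =>
        ∫ ω, ({i : ℕ | 1 ≤ i ∧ i ≤ M.N n ω ∧
            M.α * n * rhat M γ n ^ d + x * √(M.α * n * rhat M γ n ^ d)
              ≤ (deg M n (rhat M γ n) ω i : ℝ)}.ncard : ℝ) / n ∂P)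
      atTop (𝓝 (1 - stdNormalCDF x)) := by
  have hlog := tendsto_mul_log_natCast_atTop hγ
  have hmean : Tendsto (fun n : ℕ => (((n * (M.connProb (rhat M γ n)).toNNReal : NNReal) : ℝ) -
      γ * Real.log n) / √(γ * Real.log n)) atTop (𝓝 0) := by
    refine ((tendsto_natCast_mul_connProb_rhat_sub M hd hc hg hγ).div_atTop
      (Real.tendsto_sqrt_atTop.comp hlog)).congr' ?_
    filter_upwards [eventually_ge_atTop 2] with n hn
    simp only [NNReal.coe_mul, NNReal.coe_natCast, Function.comp_apply,
      Real.coe_toNNReal _ (M.connProb_mem_unitInterval (rhat_pos M hγ hn).le).1]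
  refine (tendsto_poissonMeasure_real_ge hlog hmean x).congr' ?_
  filter_upwards [eventually_ge_atTop 2] with n hn
  rw [← M.integral_ncard_setOf_deg_mem_div (rhat_pos M hγ hn).le _ (by omega),
    alpha_mul_rhat_pow M hd hγ.le (by omega)]
  rfl

/-- Proposition 4: `E[D_n(k_n)/n] → 1 - Φ(d)` where
`k_n = α n r̂_n^d + d (α n r̂_n^d)^(1/2)`. -/
theorem degree_count_tendsto (hd : 2 ≤ d) [IsProbabilityMeasure P] (M : Model d P)
    {c : ℝ} (hc : (d : ℝ) < c)
    (hg : M.g =o[atTop] fun r : ℝ => r ^ (-c))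
    {γ : ℝ} (hγ : 0 < γ) :
    Tendsto (fun n : ℕ =>
        ∫ ω, ({i : ℕ | 1 ≤ i ∧ i ≤ M.N n ω ∧
            M.α * n * rhat M γ n ^ d + d * Real.sqrt (M.α * n * rhat M γ n ^ d)
              ≤ (deg M n (rhat M γ n) ω i : ℝ)}.ncard : ℝ) / n ∂P)
      atTop (nhds (1 - stdNormalCDF d)) :=
  degree_count_tendsto_general (by omega) M hc hg.isBigO hγ d

end RCM
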